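/- (Asymptotic Müntz–Szász theorem, continuous case) Let {N_n} be an increasing sequence of natural numbers, let 𝓜_n = span{xⁿ, x^{n+1}, …, x^{n+N_n}}, let ρ_n = n/(n+N_n+1), and let C𝓜_∞ = { f ∈ C[0,1] : dist_{C[0,1]}(f, 𝓜_n) → 0 as n → ∞ }, where distances are taken in the supremum norm. If ρ_n → ρ as n → ∞, then C𝓜_∞ = { f ∈ C[0,1] : f = 0 on [0, ρ²] }. -/

import Mathlib

open MeasureTheory Filter Topology

/-- The monomial `x ↦ xᵏ` as an element of `C([0,1], ℂ)`. -/
noncomputable def monC (k : ℕ) : C(Set.Icc (0 : ℝ) 1, ℂ) :=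
  ⟨fun x => ((x : ℝ) : ℂ) ^ k, by fun_prop⟩

/-- The space `𝓜_n = span{xⁿ, …, x^{n+N_n}}` inside `C([0,1], ℂ)`. -/
noncomputable def MnC (N : ℕ → ℕ) (n : ℕ) : Submodule ℂ C(Set.Icc (0 : ℝ) 1, ℂ) :=
  Submodule.span ℂ (monC '' Set.Icc n (n + N n))


open Polynomial in
/-- The functional `p ↦ ∫₀ᵇ p` on real polynomials. -/
noncomputable def polyIntegral (b : ℝ) : ℝ[X] →ₗ[ℝ] ℝ where
  toFun p := ∫ x in (0 : ℝ)..b, p.eval x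
  map_add' p q := by
    simp only [eval_add]
    exact intervalIntegral.integral_add (p.continuous.intervalIntegrable _ _)
      (q.continuous.intervalIntegrable _ _)
  map_smul' c p := by simp

open Polynomial in
/-- The span of the monomials with exponents in `S`. -/
noncomputable def monomialSpan (S : Set ℕ) : Submodule ℝ ℝ[X] :=
  Submodule.span ℝ ((fun k => (X : ℝ[X]) ^ k) '' S)

/-- The Blaschke-type product attached to the exponents in `S`. -/
noncomputable def muntzProd (S : Finset ℕ) (s : ℕ) : ℝ :=
  ∏ k ∈ S, ((s : ℝ) - k) / (s + k + 1)

section Residual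

open Polynomial

lemma polyIntegral_apply (b : ℝ) (p : ℝ[X]) :
    polyIntegral b p = ∫ x in (0 : ℝ)..b, p.eval x := rfl

lemma polyIntegral_X_pow (b : ℝ) (k : ℕ) :
    polyIntegral b (X ^ k) = b ^ (k + 1) / (k + 1) := by
  simp [polyIntegral_apply]

lemma X_pow_mem_monomialSpan {S : Set ℕ} {k : ℕ} (hk : k ∈ S) :
    (X : ℝ[X]) ^ k ∈ monomialSpan S :=
  Submodule.subset_span ⟨k, hk, rfl⟩

lemma muntzProd_eq_zero {S : Finset ℕ} {t : ℕ} (ht : t ∈ S) : muntzProd S t = 0 :=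
  Finset.prod_eq_zero ht (by simp)

lemma muntzProd_ne_zero {S : Finset ℕ} {t : ℕ} (ht : t ∉ S) : muntzProd S t ≠ 0 := by
  refine Finset.prod_ne_zero_iff.2 fun k hk => div_ne_zero ?_ (by positivity)
  rw [sub_ne_zero]
  rintro h
  exact ht ((Nat.cast_injective h) ▸ hk)

/-- Orthogonalization against the monomials with exponents in `S`, with the explicit Gram matrix
of the residuals. -/
lemma exists_residual (S : Finset ℕ) : ∃ R : ℝ[X] →ₗ[ℝ] ℝ[X],
    (∀ p, p - R p ∈ monomialSpan S) ∧
    ∀ s t : ℕ, polyIntegral 1 (R (X ^ s) * X ^ t)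
      = muntzProd S s * muntzProd S t / (s + t + 1) := by
  induction S using Finset.induction_on with
  | empty =>
    refine ⟨LinearMap.id, by simp, fun s t => ?_⟩
    simp [← pow_add, polyIntegral_X_pow, muntzProd]
  | insert k S hk ih =>
    obtain ⟨R, hR, hE⟩ := ih
    let l : ℝ[X] →ₗ[ℝ] ℝ :=
      (polyIntegral 1 (R (X ^ k) * X ^ k))⁻¹ •
        (polyIntegral 1 ∘ₗ LinearMap.mulRight ℝ (X ^ k) ∘ₗ R)
    have hl : ∀ p, l p = (polyIntegral 1 (R (X ^ k) * X ^ k))⁻¹ *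
        polyIntegral 1 (R p * X ^ k) := fun p => rfl
    refine ⟨R - l.smulRight (R (X ^ k)), fun p => ?_, fun s t => ?_⟩
    · have hmono : monomialSpan (S : Set ℕ) ≤ monomialSpan (insert k S : Finset ℕ) :=
        Submodule.span_mono (Set.image_mono (by simp))
      have h1 : R (X ^ k) ∈ monomialSpan (insert k S : Finset ℕ) := by
        have := Submodule.sub_mem _ (X_pow_mem_monomialSpan (S := (insert k S : Finset ℕ))
          (k := k) (by simp)) (hmono (hR (X ^ k)))
        simpa using this
      have h2 := Submodule.add_mem _ (hmono (hR p)) (Submodule.smul_mem _ (l p) h1)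
      convert h2 using 1
      simp only [LinearMap.sub_apply, LinearMap.smulRight_apply]
      abel
    · have hne := muntzProd_ne_zero hk
      simp only [LinearMap.sub_apply, LinearMap.smulRight_apply, sub_mul, map_sub,
        smul_mul_assoc, map_smul, hl, hE, smul_eq_mul]
      simp only [muntzProd, Finset.prod_insert hk]
      simp only [muntzProd] at hne
      have h1 : (s : ℝ) + t + 1 ≠ 0 := by positivity
      have h2 : (s : ℝ) + k + 1 ≠ 0 := by positivity
      have h3 : (k : ℝ) + t + 1 ≠ 0 := by positivity
      have h4 : (t : ℝ) + k + 1 ≠ 0 := by positivity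
      have h5 : (k : ℝ) + k + 1 ≠ 0 := by positivity
      set a := ∏ x ∈ S, ((s : ℝ) - x) / (s + x + 1)
      set b := ∏ x ∈ S, ((t : ℝ) - x) / (t + x + 1)
      set c := ∏ x ∈ S, ((k : ℝ) - x) / (k + x + 1)
      field_simp
      ring

lemma residual_orthogonal {S : Finset ℕ} {R : ℝ[X] →ₗ[ℝ] ℝ[X]}
    (hE : ∀ s t : ℕ, polyIntegral 1 (R (X ^ s) * X ^ t)
      = muntzProd S s * muntzProd S t / (s + t + 1)) (p : ℝ[X]) {q : ℝ[X]}
    (hq : q ∈ monomialSpan S) : polyIntegral 1 (R p * q) = 0 := by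
  induction hq using Submodule.span_induction with
  | mem q hq =>
    obtain ⟨t, ht, rfl⟩ := hq
    rw [← p.sum_monomial_eq, Polynomial.sum]
    simp only [map_sum, Finset.sum_mul, ← smul_X_eq_monomial, map_smul, smul_mul_assoc, hE,
      muntzProd_eq_zero (Finset.mem_coe.1 ht)]
    simp
  | zero => simp
  | add x y _ _ hx hy => simp [mul_add, hx, hy]
  | smul c x _ hx => simp [hx]

lemma polyIntegral_residual_sq {S : Finset ℕ} {R : ℝ[X] →ₗ[ℝ] ℝ[X]}
    (hR : ∀ p, p - R p ∈ monomialSpan S)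
    (hE : ∀ s t : ℕ, polyIntegral 1 (R (X ^ s) * X ^ t)
      = muntzProd S s * muntzProd S t / (s + t + 1)) (p : ℝ[X]) :
    polyIntegral 1 (R p * R p) = ∑ s ∈ p.support, ∑ t ∈ p.support,
      p.coeff s * p.coeff t * (muntzProd S s * muntzProd S t / (s + t + 1)) := by
  have h1 : polyIntegral 1 (R p * R p) = polyIntegral 1 (R p * p) := by
    have := residual_orthogonal hE p (hR p)
    rw [mul_sub, map_sub] at this
    linarith
  rw [h1]
  have h2 : polyIntegral 1 (R (∑ s ∈ p.support, p.coeff s • X ^ s) *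
      ∑ s ∈ p.support, p.coeff s • X ^ s) = ∑ s ∈ p.support, ∑ t ∈ p.support,
      p.coeff s * p.coeff t * (muntzProd S s * muntzProd S t / (s + t + 1)) := by
    simp only [map_sum, Finset.sum_mul_sum, map_smul, smul_mul_assoc, mul_smul_comm, hE,
      smul_eq_mul]
    exact Finset.sum_congr rfl fun s _ => Finset.sum_congr rfl fun t _ => by ring
  have h3 : ∑ s ∈ p.support, p.coeff s • X ^ s = p := by
    simp only [smul_X_eq_monomial]
    exact p.sum_monomial_eq
  rwa [h3] at h2

lemma polyIntegral_sq (b : ℝ) (p : ℝ[X]) :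
    polyIntegral b (p * p) = ∑ s ∈ p.support, ∑ t ∈ p.support,
      p.coeff s * p.coeff t * (b ^ (s + t + 1) / (s + t + 1)) := by
  have h3 : ∑ s ∈ p.support, p.coeff s • X ^ s = p := by
    simp only [smul_X_eq_monomial]
    exact p.sum_monomial_eq
  have h2 : polyIntegral b ((∑ s ∈ p.support, p.coeff s • X ^ s) *
      ∑ s ∈ p.support, p.coeff s • X ^ s) = ∑ s ∈ p.support, ∑ t ∈ p.support,
      p.coeff s * p.coeff t * (b ^ (s + t + 1) / (s + t + 1)) := by
    simp only [map_sum, Finset.sum_mul_sum, smul_mul_assoc, mul_smul_comm,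
      map_smul, smul_eq_mul, ← pow_add, polyIntegral_X_pow]
    push_cast
    exact Finset.sum_congr rfl fun s _ => Finset.sum_congr rfl fun t _ => by ring
  rwa [h3] at h2

/-- The residual realizes the least-squares distance to the span. -/
lemma polyIntegral_residual_le {S : Finset ℕ} {R : ℝ[X] →ₗ[ℝ] ℝ[X]}
    (hR : ∀ p, p - R p ∈ monomialSpan S)
    (hE : ∀ s t : ℕ, polyIntegral 1 (R (X ^ s) * X ^ t)
      = muntzProd S s * muntzProd S t / (s + t + 1)) (p : ℝ[X]) {q : ℝ[X]}
    (hq : q ∈ monomialSpan S) :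
    polyIntegral 1 (R p * R p) ≤ polyIntegral 1 ((p - q) * (p - q)) := by
  have h0 := residual_orthogonal hE p (Submodule.sub_mem _ (hR p) hq)
  have h1 : (p - q) * (p - q) = R p * R p + (2 : ℝ) • (R p * (p - R p - q))
      + (p - R p - q) * (p - R p - q) := by
    rw [two_smul]; ring
  have h2 : 0 ≤ polyIntegral 1 ((p - R p - q) * (p - R p - q)) := by
    rw [polyIntegral_apply]
    refine intervalIntegral.integral_nonneg zero_le_one fun x _ => ?_
    rw [eval_mul]
    exact mul_self_nonneg _
  rw [h1, map_add, map_add, map_smul, h0]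
  simpa using h2

lemma prod_div_mul_prod_telescope (s : ℕ) (y : ℝ) (hy : (s : ℝ) < y) (L : ℕ) :
    (∏ k ∈ Finset.range L, (y + k - s) / (y + k + s + 1)) *
      ∏ j ∈ Finset.range (2 * s + 1), (y + L + j - s) =
    ∏ j ∈ Finset.range (2 * s + 1), (y + j - s) := by
  induction L with
  | zero => simp
  | succ L ih =>
    rw [← ih, Finset.prod_range_succ, mul_assoc]
    congr 1
    rw [Finset.prod_range_succ, Finset.prod_range_succ' (fun j : ℕ => y + L + j - s)]
    have hp : ∏ j ∈ Finset.range (2 * s), (y + ((L + 1 : ℕ) : ℝ) + j - s)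
        = ∏ j ∈ Finset.range (2 * s), (y + L + ((j + 1 : ℕ) : ℝ) - s) :=
      Finset.prod_congr rfl fun j _ => by push_cast; ring
    rw [hp]
    have : y + L + s + 1 ≠ 0 := by
      have : (0 : ℝ) < y := lt_of_le_of_lt (by positivity) hy
      positivity
    push_cast
    field_simp
    ring

lemma muntzProd_Ico (a L s : ℕ) (h : s < a) :
    muntzProd (Finset.Ico a (a + L)) s =
      (-1) ^ L * ∏ j ∈ Finset.range (2 * s + 1),
        ((a : ℝ) + ((j : ℝ) - s)) / ((a : ℝ) + L + ((j : ℝ) - s)) := by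
  have ha : (s : ℝ) < a := by exact_mod_cast h
  have ht := prod_div_mul_prod_telescope s a ha L
  have hpos : ∀ j : ℕ, 0 < (a : ℝ) + L + j - s := fun j => by
    have : (0 : ℝ) ≤ L := by positivity
    have : (0 : ℝ) ≤ j := by positivity
    linarith
  rw [Finset.prod_div_distrib]
  have hne : ∏ j ∈ Finset.range (2 * s + 1), ((a : ℝ) + L + j - s) ≠ 0 :=
    Finset.prod_ne_zero_iff.2 fun j _ => (hpos j).ne'
  simp only [← add_sub_assoc]
  rw [← ht, mul_div_assoc, div_self hne, mul_one, muntzProd, Finset.prod_Ico_eq_prod_range,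
    Nat.add_sub_cancel_left]
  have hc : (-1 : ℝ) ^ L = ∏ _k ∈ Finset.range L, (-1 : ℝ) := by simp
  rw [hc, ← Finset.prod_mul_distrib]
  refine Finset.prod_congr rfl fun k _ => ?_
  push_cast
  rw [← neg_eq_neg_one_mul, ← neg_div]
  congr 1 <;> ring

lemma tendsto_shift_div {a M : ℕ → ℝ} {ρ : ℝ} (hM : Tendsto M atTop atTop)
    (h : Tendsto (fun n => a n / M n) atTop (𝓝 ρ)) (c : ℝ) :
    Tendsto (fun n => (a n + c) / (M n + c)) atTop (𝓝 ρ) := by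
  have hc : Tendsto (fun n => c / M n) atTop (𝓝 0) := hM.const_div_atTop c
  have h1 : Tendsto (fun n => (a n / M n + c / M n) / (1 + c / M n)) atTop
      (𝓝 ((ρ + 0) / (1 + 0))) := (h.add hc).div (tendsto_const_nhds.add hc) (by simp)
  simp only [add_zero, div_one] at h1
  refine h1.congr' ?_
  filter_upwards [hM.eventually_gt_atTop 0] with n hn
  rw [← add_div, one_add_div hn.ne', div_div_div_cancel_right₀ hn.ne']

lemma tendsto_muntzProd_mul {a L : ℕ → ℕ} {ρ : ℝ} (ha : Tendsto a atTop atTop)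
    (h : Tendsto (fun n => (a n : ℝ) / ((a n : ℝ) + L n)) atTop (𝓝 ρ)) (s t : ℕ) :
    Tendsto (fun n => muntzProd (Finset.Ico (a n) (a n + L n)) s *
      muntzProd (Finset.Ico (a n) (a n + L n)) t) atTop (𝓝 ((ρ ^ 2) ^ (s + t + 1))) := by
  have hM : Tendsto (fun n => (a n : ℝ) + L n) atTop atTop :=
    tendsto_atTop_mono (fun n => le_add_of_nonneg_right (by positivity))
      (tendsto_natCast_atTop_atTop.comp ha)
  have key : ∀ s : ℕ, Tendsto (fun n => ∏ j ∈ Finset.range (2 * s + 1),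
      ((a n : ℝ) + ((j : ℝ) - s)) / ((a n : ℝ) + L n + ((j : ℝ) - s))) atTop
      (𝓝 (ρ ^ (2 * s + 1))) := fun s => by
    have := tendsto_finsetProd (Finset.range (2 * s + 1)) fun j _ =>
      tendsto_shift_div hM h ((j : ℝ) - s)
    simpa using this
  have h2 := (key s).mul (key t)
  have he : ρ ^ (2 * s + 1) * ρ ^ (2 * t + 1) = (ρ ^ 2) ^ (s + t + 1) := by
    rw [← pow_add, ← pow_mul]; congr 1; ring
  rw [he] at h2
  refine h2.congr' ?_
  filter_upwards [ha.eventually_gt_atTop s, ha.eventually_gt_atTop t] with n hs ht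
  rw [muntzProd_Ico _ _ _ hs, muntzProd_Ico _ _ _ ht, mul_mul_mul_comm, ← mul_pow]
  simp

/-- Asymptotics of the least-squares distance from a polynomial to the span of the monomials
with exponents in `[aₙ, aₙ + Lₙ)`. -/
lemma exists_residual_tendsto {a L : ℕ → ℕ} {ρ : ℝ} (ha : Tendsto a atTop atTop)
    (h : Tendsto (fun n => (a n : ℝ) / ((a n : ℝ) + L n)) atTop (𝓝 ρ)) (p : ℝ[X]) :
    ∃ r : ℕ → ℝ[X],
      (∀ n, p - r n ∈ monomialSpan (Finset.Ico (a n) (a n + L n))) ∧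
      (∀ n, ∀ q ∈ monomialSpan (Finset.Ico (a n) (a n + L n)),
        polyIntegral 1 (r n * r n) ≤ polyIntegral 1 ((p - q) * (p - q))) ∧
      Tendsto (fun n => polyIntegral 1 (r n * r n)) atTop
        (𝓝 (polyIntegral (ρ ^ 2) (p * p))) := by
  choose R hR hE using fun n => exists_residual (Finset.Ico (a n) (a n + L n))
  refine ⟨fun n => R n p, fun n => hR n p,
    fun n q hq => polyIntegral_residual_le (hR n) (hE n) p hq, ?_⟩
  simp only [fun n => polyIntegral_residual_sq (hR n) (hE n) p]
  rw [polyIntegral_sq]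
  exact tendsto_finsetSum _ fun s _ => tendsto_finsetSum _ fun t _ =>
    ((tendsto_muntzProd_mul ha h s t).div_const _).const_mul _

end Residual

section Approximation

open Polynomial

lemma abs_integral_le_of_sq {u : ℝ → ℝ} (hu : Continuous u) {ε : ℝ} (hε : 0 < ε)
    (h : ∫ x in (0 : ℝ)..1, u x ^ 2 ≤ ε ^ 2) {x : ℝ} (hx : x ∈ Set.Icc (0 : ℝ) 1) :
    |∫ t in (0 : ℝ)..x, u t| ≤ ε := by
  have h1 : |∫ t in (0 : ℝ)..x, u t| ≤ ∫ t in (0 : ℝ)..x, |u t| :=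
    intervalIntegral.abs_integral_le_integral_abs hx.1
  have h2 : ∫ t in (0 : ℝ)..x, |u t| ≤ ∫ t in (0 : ℝ)..1, |u t| :=
    intervalIntegral.integral_mono_interval le_rfl hx.1 hx.2
      (Eventually.of_forall fun t => abs_nonneg _) (hu.abs.intervalIntegrable _ _)
  have h3 : ∫ t in (0 : ℝ)..1, |u t| ≤ ∫ t in (0 : ℝ)..1, (ε / 2 + (2 * ε)⁻¹ * u t ^ 2) := by
    refine intervalIntegral.integral_mono_on zero_le_one (hu.abs.intervalIntegrable _ _)
      (Continuous.intervalIntegrable (by fun_prop) _ _) fun t _ => ?_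
    rw [← sq_abs (u t)]
    field_simp
    nlinarith [sq_nonneg (ε - |u t|)]
  rw [intervalIntegral.integral_add (by simp) (Continuous.intervalIntegrable (by fun_prop) _ _),
    intervalIntegral.integral_const_mul] at h3
  have h4 : (2 * ε)⁻¹ * ∫ t in (0 : ℝ)..1, u t ^ 2 ≤ (2 * ε)⁻¹ * ε ^ 2 := by gcongr
  have h5 : (2 * ε)⁻¹ * ε ^ 2 = ε / 2 := by field_simp
  simp only [intervalIntegral.integral_const, sub_zero, one_smul] at h3
  linarith

/-- A function vanishing on `[0, ρ²]` is a mean-square limit from the monomial spans. -/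
lemma eventually_exists_integral_sq_le {a L : ℕ → ℕ} {ρ : ℝ} (ha : Tendsto a atTop atTop)
    (h : Tendsto (fun n => (a n : ℝ) / ((a n : ℝ) + L n)) atTop (𝓝 ρ)) (hρ : ρ ^ 2 ≤ 1)
    {g : ℝ → ℝ} (hg : Continuous g) (hg0 : ∀ x ∈ Set.Icc 0 (ρ ^ 2), g x = 0)
    {ε : ℝ} (hε : 0 < ε) :
    ∀ᶠ n in atTop, ∃ q ∈ monomialSpan (Finset.Ico (a n) (a n + L n)),
      ∫ x in (0 : ℝ)..1, (g x - q.eval x) ^ 2 ≤ ε ^ 2 := by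
  obtain ⟨p, hp⟩ := exists_polynomial_near_of_continuousOn 0 1 g hg.continuousOn (ε / 3)
    (by positivity)
  obtain ⟨r, hr, -, hlim⟩ := exists_residual_tendsto ha h p
  have hlt : polyIntegral (ρ ^ 2) (p * p) < 2 * (ε / 3) ^ 2 := by
    have h1 : polyIntegral (ρ ^ 2) (p * p) ≤ ∫ _x in (0 : ℝ)..ρ ^ 2, (ε / 3) ^ 2 := by
      rw [polyIntegral_apply]
      refine intervalIntegral.integral_mono_on (sq_nonneg ρ)
        ((p * p).continuous.intervalIntegrable _ _) (by simp) fun x hx => ?_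
      have h2 := hp x ⟨hx.1, hx.2.trans hρ⟩
      rw [hg0 x hx, sub_zero] at h2
      rw [eval_mul, ← sq, ← sq_abs]
      gcongr
    rw [intervalIntegral.integral_const, sub_zero, smul_eq_mul] at h1
    nlinarith [sq_pos_of_pos (div_pos hε three_pos)]
  filter_upwards [hlim.eventually_lt_const hlt] with n hn
  refine ⟨p - r n, hr n, ?_⟩
  have hc1 : Continuous fun x => p.eval x := p.continuous
  have hc2 : Continuous fun x => (r n).eval x := (r n).continuous
  have h1 : ∫ x in (0 : ℝ)..1, (g x - (p - r n).eval x) ^ 2 ≤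
      ∫ x in (0 : ℝ)..1, (2 * (ε / 3) ^ 2 + 2 * (r n * r n).eval x) := by
    simp only [eval_sub, eval_mul]
    refine intervalIntegral.integral_mono_on zero_le_one
      (Continuous.intervalIntegrable (by fun_prop) _ _)
      (Continuous.intervalIntegrable (by fun_prop) _ _) fun x hx => ?_
    have h2 : (p.eval x - g x) ^ 2 ≤ (ε / 3) ^ 2 := by
      rw [← sq_abs]
      have := (hp x hx).le
      gcongr
    nlinarith [sq_nonneg (g x - p.eval x - (r n).eval x)]
  rw [intervalIntegral.integral_add (by simp)
    (((r n * r n).continuous.const_mul _).intervalIntegrable _ _),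
    intervalIntegral.integral_const_mul 2 fun x => (r n * r n).eval x, ← polyIntegral_apply] at h1
  simp only [intervalIntegral.integral_const, sub_zero, one_smul] at h1
  nlinarith [sq_pos_of_pos hε]

lemma exists_antiderivative_mem_monomialSpan {a L : ℕ} {q : ℝ[X]}
    (hq : q ∈ monomialSpan (Finset.Ico a (a + L))) :
    ∃ Q ∈ monomialSpan (Finset.Ico (a + 1) (a + 1 + L)),
      ∀ x, Q.eval x = ∫ t in (0 : ℝ)..x, q.eval t := by
  induction hq using Submodule.span_induction with
  | mem q hq =>
    obtain ⟨k, hk, rfl⟩ := hq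
    refine ⟨((k : ℝ) + 1)⁻¹ • X ^ (k + 1),
      Submodule.smul_mem _ _ (X_pow_mem_monomialSpan ?_), fun x => ?_⟩
    · simp only [Finset.coe_Ico, Set.mem_Ico] at hk ⊢
      omega
    · simp
      ring
  | zero => exact ⟨0, Submodule.zero_mem _, by simp⟩
  | add p q _ _ hp hq =>
    obtain ⟨P, hP, hP'⟩ := hp
    obtain ⟨Q, hQ, hQ'⟩ := hq
    refine ⟨P + Q, Submodule.add_mem _ hP hQ, fun x => ?_⟩
    simp only [eval_add, hP', hQ']
    exact (intervalIntegral.integral_add (p.continuous.intervalIntegrable _ _)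
      (q.continuous.intervalIntegrable _ _)).symm
  | smul c p _ hp =>
    obtain ⟨P, hP, hP'⟩ := hp
    exact ⟨c • P, Submodule.smul_mem _ _ hP, fun x => by simp [hP']⟩

/-- Uniform approximation by primitives of continuous functions supported right of `b`. -/
lemma exists_integral_near {F : ℝ → ℝ} (hF : UniformContinuous F) {b : ℝ} (hb : 0 ≤ b)
    (hF0 : ∀ x ≤ b, F x = 0) {ε : ℝ} (hε : 0 < ε) :
    ∃ g : ℝ → ℝ, Continuous g ∧ (∀ x ≤ b, g x = 0) ∧
      ∀ x, |F x - ∫ t in (0 : ℝ)..x, g t| ≤ ε := by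
  have hc := hF.continuous
  obtain ⟨δ, hδ, hFδ⟩ := Metric.uniformContinuous_iff.1 hF ε hε
  set h := δ / 2 with hh
  have hh0 : 0 < h := by positivity
  have hint : ∀ u v, IntervalIntegrable F volume u v := fun u v => hc.intervalIntegrable u v
  refine ⟨fun t => h⁻¹ * (F t - F (t - h)), by fun_prop, fun x hx => ?_, fun x => ?_⟩
  · simp [hF0 x hx, hF0 (x - h) (by linarith)]
  · have h1 : ∫ t in (0 : ℝ)..x, h⁻¹ * (F t - F (t - h)) = h⁻¹ * ∫ t in (x - h)..x, F t := by
      rw [intervalIntegral.integral_const_mul,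
        intervalIntegral.integral_sub (hint _ _) (Continuous.intervalIntegrable (by fun_prop) _ _),
        intervalIntegral.integral_comp_sub_right F h, zero_sub]
      have h2 : ∫ t in (-h)..0, F t = 0 := by
        rw [intervalIntegral.integral_congr (g := fun _ => 0)]
        · simp
        · intro t ht
          rw [Set.uIcc_of_le (by linarith)] at ht
          exact hF0 t (ht.2.trans hb)
      have h3 := intervalIntegral.integral_add_adjacent_intervals (hint (-h) 0) (hint 0 x)
      have h4 := intervalIntegral.integral_add_adjacent_intervals (hint (-h) (x - h))
        (hint (x - h) x)
      congr 1
      linarith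
    have h5 : F x - h⁻¹ * ∫ t in (x - h)..x, F t = h⁻¹ * ∫ t in (x - h)..x, (F x - F t) := by
      rw [intervalIntegral.integral_sub (by simp) (hint _ _), intervalIntegral.integral_const]
      simp only [sub_sub_cancel, smul_eq_mul]
      field_simp
    have h6 := intervalIntegral.norm_integral_le_of_norm_le_const (a := x - h) (b := x)
      (f := fun t => F x - F t) (C := ε) fun t ht => by
        rw [Set.uIoc_of_le (by linarith)] at ht
        refine (hFδ (a := x) (b := t) ?_).le
        rw [Real.dist_eq, abs_of_nonneg (by linarith [ht.2])]
        linarith [ht.1]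
    rw [h1, h5, abs_mul, abs_of_pos (inv_pos.2 hh0)]
    rw [Real.norm_eq_abs, sub_sub_cancel, abs_of_pos hh0] at h6
    rw [inv_mul_le_iff₀ hh0]
    linarith

lemma eventually_exists_near {a L : ℕ → ℕ} {ρ : ℝ} (ha : Tendsto a atTop atTop)
    (h : Tendsto (fun n => (a n : ℝ) / ((a n : ℝ) + L n)) atTop (𝓝 ρ)) (hρ : ρ ^ 2 ≤ 1)
    {F : ℝ → ℝ} (hF : UniformContinuous F) (hF0 : ∀ x ≤ ρ ^ 2, F x = 0)
    {ε : ℝ} (hε : 0 < ε) :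
    ∀ᶠ n in atTop, ∃ q ∈ monomialSpan (Finset.Ico (a n + 1) (a n + 1 + L n)),
      ∀ x ∈ Set.Icc (0 : ℝ) 1, |F x - q.eval x| ≤ ε := by
  obtain ⟨g, hg, hg0, hgF⟩ := exists_integral_near hF (sq_nonneg ρ) hF0 (half_pos hε)
  filter_upwards [eventually_exists_integral_sq_le ha h hρ hg (fun x hx => hg0 x hx.2)
    (half_pos hε)] with n hn
  obtain ⟨q, hq, hgq⟩ := hn
  obtain ⟨Q, hQ, hQq⟩ := exists_antiderivative_mem_monomialSpan hq
  refine ⟨Q, hQ, fun x hx => ?_⟩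
  have h1 := abs_integral_le_of_sq (hg.sub q.continuous) (half_pos hε) hgq hx
  simp only [Pi.sub_apply] at h1
  rw [intervalIntegral.integral_sub (hg.intervalIntegrable _ _)
    (q.continuous.intervalIntegrable _ _), ← hQq] at h1
  have h2 := abs_add_le (F x - ∫ t in (0 : ℝ)..x, g t) ((∫ t in (0 : ℝ)..x, g t) - Q.eval x)
  rw [sub_add_sub_cancel] at h2
  linarith [hgF x]

/-- A uniform limit from the monomial spans vanishes on `[0, ρ²]`. -/
lemma eq_zero_of_eventually_exists_near {a L : ℕ → ℕ} {ρ : ℝ} (ha : Tendsto a atTop atTop)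
    (h : Tendsto (fun n => (a n : ℝ) / ((a n : ℝ) + L n)) atTop (𝓝 ρ)) (hρ : ρ ^ 2 ≤ 1)
    {F : ℝ → ℝ} (hF : Continuous F)
    (hlim : ∀ ε > 0, ∀ᶠ n in atTop, ∃ q ∈ monomialSpan (Finset.Ico (a n) (a n + L n)),
      ∀ x ∈ Set.Icc (0 : ℝ) 1, |F x - q.eval x| ≤ ε)
    {x : ℝ} (hx : x ∈ Set.Icc 0 (ρ ^ 2)) : F x = 0 := by
  rcases (sq_nonneg ρ).eq_or_lt with hρ0 | hρ0
  · obtain rfl : x = 0 := le_antisymm (hρ0 ▸ hx.2) hx.1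
    refine abs_eq_zero.1 (le_antisymm (le_of_forall_pos_le_add fun ε hε => ?_) (abs_nonneg _))
    obtain ⟨n, ⟨q, hq, hFq⟩, hn⟩ :=
      ((hlim ε hε).and (ha.eventually_gt_atTop 0)).exists
    have hq0 : q.eval 0 = 0 := by
      clear hFq
      induction hq using Submodule.span_induction with
      | mem q hq =>
        obtain ⟨k, hk, rfl⟩ := hq
        have : k ≠ 0 := by
          simp only [Finset.coe_Ico, Set.mem_Ico] at hk
          omega
        simp [this]
      | zero => simp
      | add x y _ _ hx hy => simp [hx, hy]
      | smul c x _ hx => simp [hx]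
    simpa [hq0] using hFq 0 (by simp)
  · by_contra hne
    have hpos : 0 < ∫ t in (0 : ℝ)..ρ ^ 2, F t ^ 2 :=
      intervalIntegral.integral_pos hρ0 (by fun_prop) (fun t _ => sq_nonneg _)
        ⟨x, hx, by positivity⟩
    refine hpos.not_ge (le_of_forall_pos_le_add fun η hη => ?_)
    obtain ⟨ε, hε, hεη⟩ : ∃ ε > 0, 10 * ε ^ 2 ≤ η :=
      ⟨√(η / 10), by positivity, by rw [Real.sq_sqrt (by positivity)]; linarith⟩
    obtain ⟨p, hp⟩ := exists_polynomial_near_of_continuousOn 0 1 F hF.continuousOn ε hε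
    obtain ⟨r, -, hmin, hr⟩ := exists_residual_tendsto ha h p
    have h1 : polyIntegral (ρ ^ 2) (p * p) ≤ (2 * ε) ^ 2 := by
      refine le_of_tendsto hr ?_
      filter_upwards [hlim ε hε] with n hn
      obtain ⟨q, hq, hFq⟩ := hn
      refine (hmin n q hq).trans ?_
      have h2 : polyIntegral 1 ((p - q) * (p - q)) ≤ ∫ _x in (0 : ℝ)..1, (2 * ε) ^ 2 := by
        rw [polyIntegral_apply]
        refine intervalIntegral.integral_mono_on zero_le_one
          (Polynomial.continuous _ |>.intervalIntegrable _ _) (by simp) fun t ht => ?_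
        rw [eval_mul, ← sq, eval_sub]
        have h3 := abs_le.1 (hp t ht).le
        have h4 := abs_le.1 (hFq t ht)
        exact sq_le_sq' (by linarith) (by linarith)
      simpa using h2
    have hc : Continuous fun t => p.eval t := p.continuous
    have h5 : ∫ t in (0 : ℝ)..ρ ^ 2, F t ^ 2 ≤
        ∫ t in (0 : ℝ)..ρ ^ 2, (2 * ε ^ 2 + 2 * (p * p).eval t) := by
      simp only [eval_mul]
      refine intervalIntegral.integral_mono_on hρ0.le
        (Continuous.intervalIntegrable (by fun_prop) _ _)
        (Continuous.intervalIntegrable (by fun_prop) _ _) fun t ht => ?_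
      have h3 := abs_le.1 (hp t ⟨ht.1, ht.2.trans hρ⟩).le
      nlinarith [sq_le_sq' h3.1 h3.2, sq_nonneg (2 * p.eval t - F t)]
    rw [intervalIntegral.integral_add (by simp)
      (((p * p).continuous.const_mul _).intervalIntegrable _ _),
      intervalIntegral.integral_const_mul 2 fun x => (p * p).eval x, ← polyIntegral_apply] at h5
    simp only [intervalIntegral.integral_const, sub_zero, smul_eq_mul] at h5
    nlinarith [sq_nonneg ε]

end Approximation

section Complex

open Polynomial

/-- A real polynomial as a complex-valued continuous function on `[0,1]`. -/
noncomputable def polyToC : ℝ[X] →ₗ[ℝ] C(Set.Icc (0 : ℝ) 1, ℂ) where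
  toFun p := ⟨fun x => ((p.eval (x : ℝ) : ℝ) : ℂ),
    Complex.continuous_ofReal.comp (p.continuous.comp continuous_subtype_val)⟩
  map_add' p q := by ext; simp
  map_smul' c p := by ext; simp

lemma polyToC_apply (p : ℝ[X]) (x : Set.Icc (0 : ℝ) 1) :
    polyToC p x = ((p.eval (x : ℝ) : ℝ) : ℂ) := rfl

lemma polyToC_mem_MnC {N : ℕ → ℕ} {n : ℕ} {p : ℝ[X]}
    (hp : p ∈ monomialSpan (Finset.Ico n (n + (N n + 1)))) : polyToC p ∈ MnC N n := by
  induction hp using Submodule.span_induction with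
  | mem q hq =>
    obtain ⟨k, hk, rfl⟩ := hq
    refine Submodule.subset_span ⟨k, ?_, ?_⟩
    · simp only [Finset.coe_Ico, Set.mem_Ico] at hk
      exact ⟨hk.1, by omega⟩
    · ext x
      simp [polyToC_apply, monC]
  | zero => simp
  | add x y _ _ hx hy => rw [map_add]; exact Submodule.add_mem _ hx hy
  | smul c x _ hx =>
    convert Submodule.smul_mem _ (c : ℂ) hx using 1
    ext y
    simp

lemma exists_re_im_of_mem_MnC {N : ℕ → ℕ} {n : ℕ} {P : C(Set.Icc (0 : ℝ) 1, ℂ)}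
    (hP : P ∈ MnC N n) :
    ∃ p ∈ monomialSpan (Finset.Ico n (n + (N n + 1))),
      ∃ q ∈ monomialSpan (Finset.Ico n (n + (N n + 1))),
        ∀ x : Set.Icc (0 : ℝ) 1, (P x).re = p.eval (x : ℝ) ∧ (P x).im = q.eval (x : ℝ) := by
  induction hP using Submodule.span_induction with
  | mem P hP =>
    obtain ⟨k, hk, rfl⟩ := hP
    refine ⟨X ^ k, X_pow_mem_monomialSpan ?_, 0, Submodule.zero_mem _, fun x => ?_⟩
    · simp only [Finset.coe_Ico, Set.mem_Ico]
      exact ⟨hk.1, by have := hk.2; omega⟩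
    · simp only [monC, ContinuousMap.coe_mk, ← Complex.ofReal_pow, Complex.ofReal_re,
        Complex.ofReal_im, eval_pow, eval_X, eval_zero, and_self]
  | zero => exact ⟨0, Submodule.zero_mem _, 0, Submodule.zero_mem _, by simp⟩
  | add P Q _ _ hP hQ =>
    obtain ⟨p, hp, q, hq, h⟩ := hP
    obtain ⟨p', hp', q', hq', h'⟩ := hQ
    exact ⟨p + p', Submodule.add_mem _ hp hp', q + q', Submodule.add_mem _ hq hq',
      fun x => by simp [h x, h' x]⟩
  | smul c P _ hP =>
    obtain ⟨p, hp, q, hq, h⟩ := hP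
    exact ⟨c.re • p - c.im • q,
      Submodule.sub_mem _ (Submodule.smul_mem _ _ hp) (Submodule.smul_mem _ _ hq),
      c.re • q + c.im • p,
      Submodule.add_mem _ (Submodule.smul_mem _ _ hq) (Submodule.smul_mem _ _ hp),
      fun x => by simp [h x]⟩

/-- The extension of `u` by constants is uniformly continuous. -/
lemma uniformContinuous_IccExtend_zero_one {u : Set.Icc (0 : ℝ) 1 → ℝ} (hu : Continuous u) :
    UniformContinuous (Set.IccExtend (zero_le_one' ℝ) u) :=
  (CompactSpace.uniformContinuous_of_continuous hu).comp
    (LipschitzWith.projIcc (zero_le_one' ℝ)).uniformContinuous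

lemma IccExtend_zero_one_eq_zero {u : Set.Icc (0 : ℝ) 1 → ℝ} {b : ℝ} (hb0 : 0 ≤ b) (hb1 : b ≤ 1)
    (h : ∀ x : Set.Icc (0 : ℝ) 1, (x : ℝ) ≤ b → u x = 0) {x : ℝ} (hx : x ≤ b) :
    Set.IccExtend (zero_le_one' ℝ) u x = 0 := by
  refine h _ ?_
  rw [Set.coe_projIcc, min_eq_right (hx.trans hb1)]
  exact max_le hb0 hx

end Complex
/-- **Asymptotic Müntz–Szász theorem, continuous case.** Let `{N_n}` be an
increasing sequence of naturals, `𝓜_n = span{xⁿ, …, x^{n+N_n}} ⊆ C([0,1], ℂ)`,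
`ρ_n = n/(n+N_n+1)`, and `C𝓜_∞ = {f ∈ C[0,1] : dist(f, 𝓜_n) → 0}` in the
supremum norm.  If `ρ_n → ρ`, then `C𝓜_∞` is exactly the set of continuous
functions vanishing on `[0, ρ²]`. -/
theorem asymptotic_muntz_szasz_continuous (N : ℕ → ℕ) (hN : StrictMono N) (ρ : ℝ)
    (hρ : Tendsto (fun n : ℕ => (n : ℝ) / ((n : ℝ) + (N n : ℝ) + 1)) atTop (𝓝 ρ)) :
    {f : C(Set.Icc (0 : ℝ) 1, ℂ) |
        Tendsto (fun n => Metric.infDist f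
          (MnC N n : Set C(Set.Icc (0 : ℝ) 1, ℂ))) atTop (𝓝 0)} =
      {f : C(Set.Icc (0 : ℝ) 1, ℂ) | ∀ x : Set.Icc (0 : ℝ) 1, (x : ℝ) ≤ ρ ^ 2 → f x = 0} := by
  have hL : Tendsto (fun n : ℕ => (n : ℝ) / ((n : ℝ) + ((N n + 1 : ℕ) : ℝ))) atTop (𝓝 ρ) := by
    simpa [add_assoc] using hρ
  have hρ0 : 0 ≤ ρ := ge_of_tendsto' hρ fun n => by positivity
  have hρ1 : ρ ≤ 1 := le_of_tendsto' hρ fun n => by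
    refine div_le_one_of_le₀ ?_ (by positivity)
    have : (0 : ℝ) ≤ N n := by positivity
    linarith
  have hρ2 : ρ ^ 2 ≤ 1 := pow_le_one₀ hρ0 hρ1
  have hS : ∀ n, (MnC N n : Set C(Set.Icc (0 : ℝ) 1, ℂ)).Nonempty := fun n =>
    ⟨0, Submodule.zero_mem _⟩
  ext f
  simp only [Set.mem_ofPred_eq]
  have hre : Continuous fun x => (f x).re := Complex.continuous_re.comp f.continuous
  have him : Continuous fun x => (f x).im := Complex.continuous_im.comp f.continuous
  constructor
  · intro hf x hx
    have key : ∀ ε > 0, ∀ᶠ n in atTop, ∃ P ∈ MnC N n, ∀ x, ‖f x - P x‖ ≤ ε := fun ε hε => by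
      filter_upwards [hf.eventually_lt_const hε] with n hn
      obtain ⟨P, hP, hfP⟩ := (Metric.infDist_lt_iff (hS n)).1 hn
      refine ⟨P, hP, fun x => ?_⟩
      rw [← dist_eq_norm]
      exact (ContinuousMap.dist_apply_le_dist x).trans hfP.le
    have hx' : (x : ℝ) ∈ Set.Icc 0 (ρ ^ 2) := ⟨x.2.1, hx⟩
    have h1 := eq_zero_of_eventually_exists_near tendsto_id hL hρ2
      (uniformContinuous_IccExtend_zero_one hre).continuous (fun ε hε => by
        filter_upwards [key ε hε] with n ⟨P, hP, hfP⟩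
        obtain ⟨p, hp, q, hq, hpq⟩ := exists_re_im_of_mem_MnC hP
        refine ⟨p, hp, fun y hy => ?_⟩
        rw [Set.IccExtend_of_mem _ _ hy, ← (hpq ⟨y, hy⟩).1, ← Complex.sub_re]
        exact (Complex.abs_re_le_norm _).trans (hfP _)) hx'
    have h2 := eq_zero_of_eventually_exists_near tendsto_id hL hρ2
      (uniformContinuous_IccExtend_zero_one him).continuous (fun ε hε => by
        filter_upwards [key ε hε] with n ⟨P, hP, hfP⟩
        obtain ⟨p, hp, q, hq, hpq⟩ := exists_re_im_of_mem_MnC hP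
        refine ⟨q, hq, fun y hy => ?_⟩
        rw [Set.IccExtend_of_mem _ _ hy, ← (hpq ⟨y, hy⟩).2, ← Complex.sub_im]
        exact (Complex.abs_im_le_norm _).trans (hfP _)) hx'
    rw [Set.IccExtend_of_mem _ _ x.2] at h1 h2
    exact Complex.ext h1 h2
  · intro hf
    have hM : Tendsto (fun n : ℕ => ((n + 1 : ℕ) : ℝ) + ((N (n + 1) + 1 : ℕ) : ℝ)) atTop atTop :=
      tendsto_atTop_mono (fun n => le_add_of_nonneg_right (by positivity))
        (tendsto_natCast_atTop_atTop.comp (tendsto_add_atTop_nat 1))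
    have hL' : Tendsto (fun n : ℕ => (n : ℝ) / ((n : ℝ) + ((N (n + 1) + 1 : ℕ) : ℝ)))
        atTop (𝓝 ρ) := by
      refine (tendsto_shift_div hM (hL.comp (tendsto_add_atTop_nat 1)) (-1)).congr fun n => ?_
      push_cast
      congr 1 <;> ring
    rw [← tendsto_add_atTop_iff_nat 1, Metric.tendsto_atTop']
    intro ε hε
    have h1 := eventually_exists_near tendsto_id hL' hρ2
      (uniformContinuous_IccExtend_zero_one hre)
      (fun x hx => IccExtend_zero_one_eq_zero (sq_nonneg ρ) hρ2 (fun y hy => by simp [hf y hy]) hx)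
      (ε := ε / 3) (by positivity)
    have h2 := eventually_exists_near tendsto_id hL' hρ2
      (uniformContinuous_IccExtend_zero_one him)
      (fun x hx => IccExtend_zero_one_eq_zero (sq_nonneg ρ) hρ2 (fun y hy => by simp [hf y hy]) hx)
      (ε := ε / 3) (by positivity)
    obtain ⟨n₀, hn₀⟩ := eventually_atTop.1 (h1.and h2)
    refine ⟨n₀, fun n hn => ?_⟩
    obtain ⟨⟨p, hp, hfp⟩, q, hq, hfq⟩ := hn₀ n hn.le
    rw [Real.dist_eq, sub_zero, abs_of_nonneg Metric.infDist_nonneg]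
    have hmem : polyToC p + Complex.I • polyToC q ∈ MnC N (n + 1) :=
      Submodule.add_mem _ (polyToC_mem_MnC hp) (Submodule.smul_mem _ _ (polyToC_mem_MnC hq))
    refine (Metric.infDist_le_dist_of_mem hmem).trans_lt ?_
    refine lt_of_le_of_lt ((ContinuousMap.dist_le (C := ε / 3 + ε / 3) (by positivity)).2
      fun x => ?_) (by linarith)
    have h3 := hfp x x.2
    have h4 := hfq x x.2
    rw [Set.IccExtend_of_mem _ _ x.2] at h3 h4
    rw [dist_eq_norm]
    refine (Complex.norm_le_abs_re_add_abs_im _).trans (add_le_add ?_ ?_)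
    · simpa [polyToC_apply] using h3
    · simpa [polyToC_apply] using h4
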